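/- arXiv:1412.7457 — 2 statements merged into one kernel-verified Lean document; each statement's English description precedes it below -/
import Mathlib

section
/- Let f : ℝ^n → ℝ be convex and continuously differentiable with L-Lipschitz continuous gradient (L > 0), and let x* be a minimizer of f with f* = f(x*). Let β ∈ [0,1) and α ∈ [(1-β)/L, 2(1-β)/L). Let {x_k} be generated by the Heavy-ball iteration x_{k+1} = x_k - α∇f(x_k) + β(x_k - x_{k-1}) with initialization x_{-1} = x_0. Then for every T ∈ ℕ, the Cesàro average x̄_T = (1/(T+1)) Σ_{k=0}^{T} x_k satisfies f(x̄_T) - f* ≤ (‖x_0 - x*‖² / (2(T+1)(2(1-β) - αL))) · (Lβ + (1-β)²/α). -/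
/-!
The shifted points `z k = x k + (β / (1 - β)) • (x k - x (k - 1))` turn the Heavy-ball recursion
into a gradient step: `z (k + 1) = z k - (α / (1 - β)) • f' (x k)`. Expanding
`‖z (k + 1) - xstar‖ ^ 2` produces the inner products `⟪f' (x k), x k - xstar⟫` and
`⟪f' (x k), x k - x (k - 1)⟫`, and a term in `‖f' (x k)‖ ^ 2`. The second inner product is at least
`f (x k) - f (x (k - 1))` by convexity. The first is bounded below in two ways,

* `⟪f' (x k), x k - xstar⟫ ≥ f (x k) - f xstar + ‖f' (x k)‖ ^ 2 / (2 L)`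
  (`sub_min_add_norm_gradient_sq_le`),
* `⟪f' (x k), x k - xstar⟫ ≥ ‖f' (x k)‖ ^ 2 / L`, which follows from the previous bound and
  `f (x k) - f xstar ≥ ‖f' (x k)‖ ^ 2 / (2 L)` (`norm_gradient_sq_le`),

and the convex combination of these with weight `2 - α L / (1 - β)` on the first (this weight lies in
`(0, 1]` exactly for the step-sizes considered) cancels the `‖f' (x k)‖ ^ 2` term. What remains
telescopes (`heavyBall_step`, `heavyBall_sum`); Jensen's inequality transfers the bound on the sum of
function values to the Cesàro average.
-/

open scoped RealInnerProductSpace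

section Smooth

variable {E : Type*} [NormedAddCommGroup E] [InnerProductSpace ℝ E] [CompleteSpace E]
  {f : E → ℝ} {f' : E → E} {L : ℝ}

lemma hasDerivAt_along_line (hgrad : ∀ z, HasGradientAt f (f' z) z) (x v : E) (t : ℝ) :
    HasDerivAt (fun s : ℝ => f (x + s • v)) ⟪f' (x + t • v), v⟫ t := by
  have hline : HasDerivAt (fun s : ℝ => x + s • v) v t := by
    simpa using ((hasDerivAt_id t).smul_const v).const_add x
  have h := (hgrad (x + t • v)).hasFDerivAt.comp_hasDerivAt t hline
  rw [InnerProductSpace.toDual_apply_apply] at h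
  exact h

/-- The first-order characterisation of convexity: the graph lies above its tangents. -/
lemma gradient_ineq (hconv : ConvexOn ℝ Set.univ f) (hgrad : ∀ z, HasGradientAt f (f' z) z)
    (x y : E) : f x + ⟪f' x, y - x⟫ ≤ f y := by
  have hc : ConvexOn ℝ Set.univ (fun s : ℝ => f (x + s • (y - x))) := by
    have h := hconv.comp_affineMap (AffineMap.lineMap x y : ℝ →ᵃ[ℝ] E)
    simpa [Function.comp_def, AffineMap.lineMap_apply, add_comm] using h
  have hd := hasDerivAt_along_line hgrad x (y - x) 0
  have h := hc.le_slope_of_hasDerivAt (Set.mem_univ 0) (Set.mem_univ 1) one_pos hd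
  simp [slope_def_field] at h
  linarith

/-- The descent lemma: a function with `L`-Lipschitz gradient lies below its quadratic upper
model. -/
lemma descent_lemma (hgrad : ∀ z, HasGradientAt f (f' z) z)
    (hlip : ∀ z w, ‖f' z - f' w‖ ≤ L * ‖z - w‖) (x v : E) :
    f (x + v) ≤ f x + ⟪f' x, v⟫ + L / 2 * ‖v‖ ^ 2 := by
  -- The gap to the quadratic model along the segment is antitone.
  let φ : ℝ → ℝ := fun t => f (x + t • v) - t * ⟪f' x, v⟫ - L / 2 * ‖v‖ ^ 2 * t ^ 2
  have hφ : ∀ t, HasDerivAt φ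
      (⟪f' (x + t • v), v⟫ - ⟪f' x, v⟫ - L / 2 * ‖v‖ ^ 2 * (2 * t)) t := by
    intro t
    have h1 := (hasDerivAt_id t).mul_const ⟪f' x, v⟫
    have h2 := (hasDerivAt_pow 2 t).const_mul (L / 2 * ‖v‖ ^ 2)
    exact (((hasDerivAt_along_line hgrad x v t).sub h1).sub h2).congr_deriv (by simp)
  have hanti : AntitoneOn φ (Set.Ici 0) := by
    refine antitoneOn_of_deriv_nonpos (convex_Ici 0)
      (fun t _ => (hφ t).continuousAt.continuousWithinAt)
      (fun t _ => (hφ t).differentiableAt.differentiableWithinAt) fun t ht => ?_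
    rw [interior_Ici] at ht
    have ht : 0 < t := ht
    rw [(hφ t).deriv, ← inner_sub_left]
    have h1 := real_inner_le_norm (f' (x + t • v) - f' x) v
    have h2 : ‖f' (x + t • v) - f' x‖ ≤ L * (t * ‖v‖) := by
      simpa [norm_smul, abs_of_pos ht] using hlip (x + t • v) x
    have h3 := mul_le_mul_of_nonneg_right h2 (norm_nonneg v)
    nlinarith
  have h := hanti (Set.mem_Ici.2 le_rfl) (Set.mem_Ici.2 zero_le_one) zero_le_one
  simp [φ] at h
  linarith

lemma gradient_eq_zero_of_forall_le (hgrad : ∀ z, HasGradientAt f (f' z) z) {xs : E}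
    (hmin : ∀ z, f xs ≤ f z) : f' xs = 0 := by
  have h : IsLocalMin f xs := Filter.Eventually.of_forall hmin
  simpa using h.hasFDerivAt_eq_zero (hgrad xs).hasFDerivAt

lemma sub_min_le (hgrad : ∀ z, HasGradientAt f (f' z) z)
    (hlip : ∀ z w, ‖f' z - f' w‖ ≤ L * ‖z - w‖) {xs : E} (hmin : ∀ z, f xs ≤ f z) (x : E) :
    f x - f xs ≤ L / 2 * ‖x - xs‖ ^ 2 := by
  have h := descent_lemma hgrad hlip xs (x - xs)
  rw [gradient_eq_zero_of_forall_le hgrad hmin, inner_zero_left, add_sub_cancel] at h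
  linarith

lemma norm_gradient_sq_le (hL : 0 < L) (hgrad : ∀ z, HasGradientAt f (f' z) z)
    (hlip : ∀ z w, ‖f' z - f' w‖ ≤ L * ‖z - w‖) {xs : E} (hmin : ∀ z, f xs ≤ f z) (x : E) :
    ‖f' x‖ ^ 2 / (2 * L) ≤ f x - f xs := by
  -- A gradient step of length `1 / L` from `x` cannot go below the minimum.
  have h := (hmin _).trans (descent_lemma hgrad hlip x (-(1 / L) • f' x))
  rw [inner_smul_right, real_inner_self_eq_norm_sq, norm_smul, mul_pow, Real.norm_eq_abs,
    sq_abs] at h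
  have : -(1 / L) * ‖f' x‖ ^ 2 + L / 2 * ((-(1 / L)) ^ 2 * ‖f' x‖ ^ 2)
      = -(‖f' x‖ ^ 2 / (2 * L)) := by field_simp; ring
  linarith

/-- The gradient inequality towards a minimizer, sharpened by the smoothness of `f`. -/
lemma sub_min_add_norm_gradient_sq_le (hL : 0 < L) (hconv : ConvexOn ℝ Set.univ f)
    (hgrad : ∀ z, HasGradientAt f (f' z) z)
    (hlip : ∀ z w, ‖f' z - f' w‖ ≤ L * ‖z - w‖) {xs : E} (hmin : ∀ z, f xs ≤ f z) (x : E) :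
    f x - f xs + ‖f' x‖ ^ 2 / (2 * L) ≤ ⟪f' x, x - xs⟫ := by
  -- Compare the tangent at `x` and the quadratic upper model at `xs` in the point
  -- `xs + (1 / L) • f' x`, where their difference is largest.
  have h1 := sub_min_le hgrad hlip hmin (xs + (1 / L) • f' x)
  have h2 := gradient_ineq hconv hgrad x (xs + (1 / L) • f' x)
  have h3 : xs + (1 / L) • f' x - x = (1 / L) • f' x - (x - xs) := by abel
  rw [add_sub_cancel_left, norm_smul, mul_pow, Real.norm_eq_abs, sq_abs] at h1
  rw [h3, inner_sub_right, inner_smul_right, real_inner_self_eq_norm_sq] at h2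
  have h4 : L / 2 * ((1 / L) ^ 2 * ‖f' x‖ ^ 2) = ‖f' x‖ ^ 2 / (2 * L) := by field_simp
  have h5 : 1 / L * ‖f' x‖ ^ 2 = 2 * (‖f' x‖ ^ 2 / (2 * L)) := by field_simp
  linarith

/-- One Heavy-ball step from `y` (previous iterate `w`, next iterate `u`), measured by the squared
distance of the shifted points to the minimizer. -/
lemma heavyBall_step (hL : 0 < L) (hconv : ConvexOn ℝ Set.univ f)
    (hgrad : ∀ z, HasGradientAt f (f' z) z)
    (hlip : ∀ z w, ‖f' z - f' w‖ ≤ L * ‖z - w‖) {xs : E} (hmin : ∀ z, f xs ≤ f z)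
    {α β : ℝ} (hβ0 : 0 ≤ β) (hβ1 : β < 1) (hα1 : (1 - β) / L ≤ α)
    {w y u : E} (hu : u = y - α • f' y + β • (y - w)) :
    ‖u + (β / (1 - β)) • (u - y) - xs‖ ^ 2
      + 2 * (α / (1 - β)) * (2 - α * L / (1 - β)) * (f y - f xs)
      + 2 * (α / (1 - β)) * (β / (1 - β)) * (f y - f w)
      ≤ ‖y + (β / (1 - β)) • (y - w) - xs‖ ^ 2 := by
  have hb : 0 < 1 - β := by linarith
  have hα : 0 < α := (div_pos hb hL).trans_le hα1
  rw [div_le_iff₀ hL] at hα1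
  have ha : 0 < α / (1 - β) := div_pos hα hb
  have hc : 0 ≤ β / (1 - β) := div_nonneg hβ0 hb.le
  have hz : u + (β / (1 - β)) • (u - y) - xs
      = (y - xs + (β / (1 - β)) • (y - w)) - (α / (1 - β)) • f' y := by
    subst hu
    match_scalars <;> field_simp <;> ring
  have hy : y + (β / (1 - β)) • (y - w) - xs = y - xs + (β / (1 - β)) • (y - w) := by abel
  rw [hz, hy, norm_sub_sq_real (_ + _), norm_smul, mul_pow, Real.norm_eq_abs, sq_abs,
    inner_smul_right, inner_add_left, real_inner_smul_left, real_inner_comm (f' y),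
    real_inner_comm (f' y)]
  have hA := sub_min_add_norm_gradient_sq_le hL hconv hgrad hlip hmin y
  have hB := norm_gradient_sq_le hL hgrad hlip hmin y
  have hC : f y - f w ≤ ⟪f' y, y - w⟫ := by
    have h := gradient_ineq hconv hgrad y w
    rw [← neg_sub y w, inner_neg_right] at h
    linarith
  have hN : ‖f' y‖ ^ 2 = 2 * L * (‖f' y‖ ^ 2 / (2 * L)) := by field_simp
  have hq : α * L / (1 - β) = α / (1 - β) * L := by ring
  have ha1 : 1 ≤ α / (1 - β) * L := by
    rw [← hq, le_div_iff₀ hb]; linarith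
  rw [hN, hq]
  generalize α / (1 - β) = a at *
  generalize β / (1 - β) = c at *
  generalize ‖f' y‖ ^ 2 / (2 * L) = N at *
  -- `hA` and `hB` are weighted so that the terms in `N` cancel.
  have e1 := mul_le_mul_of_nonneg_left hC (mul_nonneg ha.le hc)
  have e2 := mul_le_mul_of_nonneg_left hA ha.le
  have e3 := mul_le_mul_of_nonneg_left hB (mul_nonneg ha.le (sub_nonneg.2 ha1))
  nlinarith

/-- The one-step estimate summed over `k = 0, …, m - 1`. -/
lemma heavyBall_sum (hL : 0 < L) (hconv : ConvexOn ℝ Set.univ f)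
    (hgrad : ∀ z, HasGradientAt f (f' z) z)
    (hlip : ∀ z w, ‖f' z - f' w‖ ≤ L * ‖z - w‖) {xs : E} (hmin : ∀ z, f xs ≤ f z)
    {α β : ℝ} (hβ0 : 0 ≤ β) (hβ1 : β < 1) (hα1 : (1 - β) / L ≤ α)
    {x : ℤ → E} (hinit : x (-1) = x 0)
    (hiter : ∀ k : ℤ, 0 ≤ k → x (k + 1) = x k - α • f' (x k) + β • (x k - x (k - 1))) (m : ℕ) :
    ‖x m + (β / (1 - β)) • (x m - x (m - 1)) - xs‖ ^ 2
      + 2 * (α / (1 - β)) * (2 - α * L / (1 - β)) * ∑ k ∈ Finset.range m, (f (x k) - f xs)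
      + 2 * (α / (1 - β)) * (β / (1 - β)) * (f (x (m - 1)) - f (x 0))
      ≤ ‖x 0 - xs‖ ^ 2 := by
  induction m with
  | zero => simp [hinit]
  | succ m ih =>
    have h := heavyBall_step hL hconv hgrad hlip hmin hβ0 hβ1 hα1 (hiter m (by positivity))
    rw [Finset.sum_range_succ]
    push_cast
    rw [add_sub_cancel_right]
    linarith

end Smooth

/-- Jensen's inequality for a uniform average. -/
lemma map_average_sub_le {E : Type*} [AddCommGroup E] [Module ℝ E] {f : E → ℝ}
    (hconv : ConvexOn ℝ Set.univ f) (c : ℝ) (y : ℕ → E) (T : ℕ) :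
    f ((1 / (T + 1) : ℝ) • ∑ k ∈ Finset.range (T + 1), y k) - c
      ≤ (∑ k ∈ Finset.range (T + 1), (f (y k) - c)) / (T + 1) := by
  have hT : (0 : ℝ) < T + 1 := by positivity
  have h := hconv.map_sum_le (t := Finset.range (T + 1)) (w := fun _ => (1 / (T + 1) : ℝ)) (p := y)
    (fun _ _ => by positivity) (by simp; field_simp) (fun _ _ => Set.mem_univ _)
  rw [← Finset.smul_sum, ← Finset.smul_sum, smul_eq_mul, one_div_mul_eq_div] at h
  rw [Finset.sum_sub_distrib, Finset.sum_const, Finset.card_range, nsmul_eq_mul, sub_div]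
  push_cast
  rw [mul_div_cancel_left₀ _ hT.ne']
  linarith

/-- Theorem 1 (case α ∈ [(1-β)/L, 2(1-β)/L)): Cesàro averages of the Heavy-ball
iterates converge at rate O(1/T). -/
theorem heavy_ball_cesaro_large_step
    {n : ℕ} (f : EuclideanSpace ℝ (Fin n) → ℝ)
    (f' : EuclideanSpace ℝ (Fin n) → EuclideanSpace ℝ (Fin n))
    (L : ℝ) (hL : 0 < L)
    (hconv : ConvexOn ℝ Set.univ f)
    (hC1 : ContDiff ℝ 1 f)
    (hgrad : ∀ z, HasGradientAt f (f' z) z)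
    (hlip : ∀ z w, ‖f' z - f' w‖ ≤ L * ‖z - w‖)
    (xstar : EuclideanSpace ℝ (Fin n)) (hmin : ∀ z, f xstar ≤ f z)
    (α β : ℝ) (hβ0 : 0 ≤ β) (hβ1 : β < 1)
    (hα1 : (1 - β) / L ≤ α) (hα2 : α < 2 * (1 - β) / L)
    (x : ℤ → EuclideanSpace ℝ (Fin n))
    (hinit : x (-1) = x 0)
    (hiter : ∀ k : ℤ, 0 ≤ k →
      x (k + 1) = x k - α • f' (x k) + β • (x k - x (k - 1)))
    (T : ℕ) :
    f ((1 / (T + 1) : ℝ) • ∑ k ∈ Finset.range (T + 1), x (k : ℤ)) - f xstar ≤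
      ‖x 0 - xstar‖ ^ 2 / (2 * (T + 1) * (2 * (1 - β) - α * L)) *
        (L * β + (1 - β) ^ 2 / α) := by
  have hb : 0 < 1 - β := by linarith
  have hα : 0 < α := (div_pos hb hL).trans_le hα1
  have hd : 0 < 2 * (1 - β) - α * L := by
    rw [lt_div_iff₀ hL] at hα2; linarith
  have hT : (0 : ℝ) < T + 1 := by positivity
  have hs := heavyBall_sum hL hconv hgrad hlip hmin hβ0 hβ1 hα1 hinit hiter (T + 1)
  have h0 := sub_min_le hgrad hlip hmin (x 0)
  refine (map_average_sub_le hconv (f xstar) (fun k => x k) T).trans ?_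
  push_cast at hs
  rw [add_sub_cancel_right] at hs
  set S := ∑ k ∈ Finset.range (T + 1), (f (x k) - f xstar)
  set D := ‖x 0 - xstar‖ ^ 2
  have hκ : 0 ≤ 2 * (α / (1 - β)) * (β / (1 - β)) := by positivity
  have hS : 2 * (α / (1 - β)) * (2 - α * L / (1 - β)) * S
      ≤ D + 2 * (α / (1 - β)) * (β / (1 - β)) * (L / 2 * D) := by
    -- `f (x T)` is bounded below by the minimum, `f (x 0)` above by smoothness.
    have h1 : f (x 0) - f (x T) ≤ L / 2 * D := by linarith [hmin (x T)]
    have h2 := mul_le_mul_of_nonneg_left h1 hκ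
    have h3 := sq_nonneg
      ‖x ((T : ℤ) + 1) + (β / (1 - β)) • (x ((T : ℤ) + 1) - x T) - xstar‖
    linarith
  -- Clear the denominators `(1 - β) ^ 2`.
  have hS' : 2 * α * (2 * (1 - β) - α * L) * S ≤ D * ((1 - β) ^ 2 + α * β * L) := by
    have h := mul_le_mul_of_nonneg_left hS (sq_nonneg (1 - β))
    have e1 : (1 - β) ^ 2 * (2 * (α / (1 - β)) * (2 - α * L / (1 - β)) * S)
        = 2 * α * (2 * (1 - β) - α * L) * S := by field_simp
    have e2 : (1 - β) ^ 2 * (D + 2 * (α / (1 - β)) * (β / (1 - β)) * (L / 2 * D))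
        = D * ((1 - β) ^ 2 + α * β * L) := by field_simp
    rwa [e1, e2] at h
  have e : D / (2 * (T + 1) * (2 * (1 - β) - α * L)) * (L * β + (1 - β) ^ 2 / α)
      = D * ((1 - β) ^ 2 + α * β * L) / (2 * α * (2 * (1 - β) - α * L)) / (T + 1) := by
    field_simp
    ring
  rw [e]
  gcongr
  rw [le_div_iff₀ (by positivity)]
  linarith
end

section
/- Let f : ℝ^n → ℝ be convex and continuously differentiable with L-Lipschitz continuous gradient (L > 0), let x* be a minimizer of f with f* = f(x*), and let β ∈ [0,1). Let {x_k}, {y_k} satisfy y_{k+1} = x_k - (1/L)∇f(x_k) and x_{k+1} = y_{k+1} + β(y_{k+1} - y_k), and define p_k = (β/(1-β))(x_k - x_{k-1} + (1/L)∇f(x_{k-1})). Then for every k, (2/(L(1-β)²))(f(x_k) - f*) + ‖x_{k+1} + p_{k+1} - x*‖² ≤ (2β/(L(1-β)²))(f(x_{k-1}) - f*) + ‖x_k + p_k - x*‖² - (β/(L²(1-β)²))‖∇f(x_{k-1})‖². -/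
open scoped RealInnerProductSpace

/-!
With `z k = x k + p k` the iteration telescopes to
`z (k + 1) = z k - (1 / (L (1 - β))) • f' (x k)`. Expanding `‖z (k + 1) - xstar‖ ^ 2` leaves the
inner products of `f' (x k)` with `x k - xstar` and with `x k - x (k - 1)`, and the interpolation
inequality `interpolation_of_convex_lipschitz_gradient` bounds both from below. Weighted by
`1 - β` and `β`, these two bounds add up exactly to the claim. The interpolation inequality itself
compares the supporting hyperplane at one point with the quadratic upper bound at the other, both
evaluated after a gradient step of length `1 / L`.
-/

section Smooth

variable {E : Type*} [NormedAddCommGroup E] [InnerProductSpace ℝ E] [CompleteSpace E]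
  {f : E → ℝ} {f' : E → E} {L : ℝ}

lemma hasDerivAt_comp_line (hgrad : ∀ z, HasGradientAt f (f' z) z) (z d : E) (t : ℝ) :
    HasDerivAt (fun s : ℝ => f (z + s • d)) ⟪f' (z + t • d), d⟫ t := by
  have hline : HasDerivAt (fun s : ℝ => z + s • d) d t := by
    simpa using ((hasDerivAt_id t).smul_const d).const_add z
  have h := (hgrad (z + t • d)).hasFDerivAt.comp_hasDerivAt t hline
  simpa [Function.comp_def] using h

/-- The supporting hyperplane of a differentiable convex function. -/
lemma gradient_inequality (hconv : ConvexOn ℝ Set.univ f)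
    (hgrad : ∀ z, HasGradientAt f (f' z) z) (z w : E) :
    f z + ⟪f' z, w - z⟫ ≤ f w := by
  have hc : ConvexOn ℝ Set.univ (fun s : ℝ => f (z + s • (w - z))) := by
    have h := hconv.comp_affineMap (AffineMap.lineMap (k := ℝ) z w)
    simpa [Function.comp_def, AffineMap.lineMap_apply, add_comm] using h
  have h := hc.le_slope_of_hasDerivAt (Set.mem_univ 0) (Set.mem_univ 1) one_pos
    (hasDerivAt_comp_line hgrad z (w - z) 0)
  simp [slope_def_field] at h
  linarith

/-- The descent lemma: a Lipschitz gradient yields a quadratic upper bound. -/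
lemma quadratic_upper_bound (hgrad : ∀ z, HasGradientAt f (f' z) z)
    (hlip : ∀ z w, ‖f' z - f' w‖ ≤ L * ‖z - w‖) (z w : E) :
    f w ≤ f z + ⟪f' z, w - z⟫ + L / 2 * ‖w - z‖ ^ 2 := by
  set d := w - z with hd
  have hderiv (t : ℝ) : HasDerivAt
      (fun s : ℝ => f (z + s • d) - s * ⟪f' z, d⟫ - L / 2 * ‖d‖ ^ 2 * s ^ 2)
      (⟪f' (z + t • d), d⟫ - ⟪f' z, d⟫ - L / 2 * ‖d‖ ^ 2 * (2 * t)) t := by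
    have h1 := (hasDerivAt_id t).mul_const ⟪f' z, d⟫
    have h2 := (hasDerivAt_pow 2 t).const_mul (L / 2 * ‖d‖ ^ 2)
    refine (((hasDerivAt_comp_line hgrad z d t).sub h1).sub h2).congr_deriv ?_
    simp
  have hanti := antitoneOn_of_hasDerivWithinAt_nonpos (convex_Icc (0 : ℝ) 1)
    (fun t _ => (hderiv t).continuousAt.continuousWithinAt)
    (fun t _ => (hderiv t).hasDerivWithinAt) (by
      intro t ht
      rw [interior_Icc] at ht
      have hcs := real_inner_le_norm (f' (z + t • d) - f' z) d
      have hl := hlip (z + t • d) z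
      rw [add_sub_cancel_left, norm_smul, Real.norm_of_nonneg ht.1.le] at hl
      have hm := mul_le_mul_of_nonneg_right hl (norm_nonneg d)
      rw [inner_sub_left] at hcs
      linarith)
  have h := hanti (Set.left_mem_Icc.2 zero_le_one) (Set.right_mem_Icc.2 zero_le_one) zero_le_one
  have hw : z + d = w := by simp [hd]
  simp [hw] at h
  linarith

/-- The sharp lower bound for convex functions with `L`-Lipschitz gradient: the supporting
hyperplane at `z`, improved by the squared difference of the gradients. -/
lemma interpolation_of_convex_lipschitz_gradient (hL : 0 < L) (hconv : ConvexOn ℝ Set.univ f)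
    (hgrad : ∀ z, HasGradientAt f (f' z) z)
    (hlip : ∀ z w, ‖f' z - f' w‖ ≤ L * ‖z - w‖) (z w : E) :
    2 * L * (f z + ⟪f' z, w - z⟫) + ‖f' w - f' z‖ ^ 2 ≤ 2 * L * f w := by
  -- This point minimises the quadratic upper bound at `w` minus the hyperplane at `z`.
  set u := w - (1 / L) • (f' w - f' z) with hu
  have h1 := gradient_inequality hconv hgrad z u
  have h2 := quadratic_upper_bound hgrad hlip w u
  have huw : u - w = -((1 / L) • (f' w - f' z)) := by rw [hu]; abel
  have huz : u - z = (w - z) - (1 / L) • (f' w - f' z) := by rw [hu]; abel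
  rw [huz, inner_sub_right, real_inner_smul_right] at h1
  rw [huw, inner_neg_right, real_inner_smul_right, norm_neg, norm_smul,
    Real.norm_of_nonneg (by positivity)] at h2
  have hn : ⟪f' w, f' w - f' z⟫ - ⟪f' z, f' w - f' z⟫ = ‖f' w - f' z‖ ^ 2 := by
    rw [← inner_sub_left, real_inner_self_eq_norm_sq]
  have h3 : f z + ⟪f' z, w - z⟫ + 1 / (2 * L) * ‖f' w - f' z‖ ^ 2 ≤ f w := by
    have e : L / 2 * (1 / L * ‖f' w - f' z‖) ^ 2
        = 1 / L * ‖f' w - f' z‖ ^ 2 - 1 / (2 * L) * ‖f' w - f' z‖ ^ 2 := by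
      field_simp; ring
    rw [e, ← hn] at h2
    rw [← hn]
    linarith
  have h4 := mul_le_mul_of_nonneg_left h3 (by positivity : 0 ≤ 2 * L)
  have e : 2 * L * (1 / (2 * L) * ‖f' w - f' z‖ ^ 2) = ‖f' w - f' z‖ ^ 2 := by field_simp
  linarith

end Smooth

open scoped RealInnerProductSpace

/-- Key per-step inequality in the proof of Theorem 3 (Nesterov's method with
constant step-sizes), with p_k = (β/(1-β))(x_k - x_{k-1} + (1/L)∇f(x_{k-1})). -/
theorem nesterov_constant_step_per_step
    {n : ℕ} (f : EuclideanSpace ℝ (Fin n) → ℝ)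
    (f' : EuclideanSpace ℝ (Fin n) → EuclideanSpace ℝ (Fin n))
    (L : ℝ) (hL : 0 < L)
    (hconv : ConvexOn ℝ Set.univ f)
    (hC1 : ContDiff ℝ 1 f)
    (hgrad : ∀ z, HasGradientAt f (f' z) z)
    (hlip : ∀ z w, ‖f' z - f' w‖ ≤ L * ‖z - w‖)
    (xstar : EuclideanSpace ℝ (Fin n)) (hmin : ∀ z, f xstar ≤ f z)
    (β : ℝ) (hβ0 : 0 ≤ β) (hβ1 : β < 1)
    (x y : ℤ → EuclideanSpace ℝ (Fin n))
    (hitery : ∀ k : ℤ, y (k + 1) = x k - (1 / L) • f' (x k))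
    (hiterx : ∀ k : ℤ, x (k + 1) = y (k + 1) + β • (y (k + 1) - y k))
    (k : ℤ) :
    2 / (L * (1 - β) ^ 2) * (f (x k) - f xstar) +
        ‖x (k + 1) +
          (β / (1 - β)) • (x (k + 1) - x k + (1 / L) • f' (x k)) - xstar‖ ^ 2 ≤
      2 * β / (L * (1 - β) ^ 2) * (f (x (k - 1)) - f xstar) +
        ‖x k +
          (β / (1 - β)) • (x k - x (k - 1) + (1 / L) • f' (x (k - 1))) - xstar‖ ^ 2 -
        β / (L ^ 2 * (1 - β) ^ 2) * ‖f' (x (k - 1))‖ ^ 2 := by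
  have hb : 0 < 1 - β := by linarith
  set g := f' (x k) with hg
  set h := f' (x (k - 1)) with hh
  have hyk : y k = x (k - 1) - (1 / L) • h := by simpa using hitery (k - 1)
  have hxk : x (k + 1) = x k - (1 / L) • g + β • (x k - (1 / L) • g - y k) := by
    rw [hiterx, hitery]
  -- The error of `x k + p k`.
  set a := x k + (β / (1 - β)) • (x k - x (k - 1) + (1 / L) • h) - xstar with ha
  have hstep : x (k + 1) + (β / (1 - β)) • (x (k + 1) - x k + (1 / L) • g) - xstar
      = a - (1 / (L * (1 - β))) • g := by
    rw [ha, hxk, hyk]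
    match_scalars <;> field_simp <;> ring
  have hinner : (1 - β) * L * ⟪a, g⟫
      = (1 - β) * L * ⟪g, x k - xstar⟫ + β * L * ⟪g, x k - x (k - 1)⟫ + β * ⟪g, h⟫ := by
    have e : a = (x k - xstar) + (β / (1 - β)) • ((x k - x (k - 1)) + (1 / L) • h) := by
      rw [ha]; abel
    rw [real_inner_comm, e]
    simp only [inner_add_right, real_inner_smul_right]
    field_simp
    ring
  have hstar : f' xstar = 0 := by
    have hloc : IsLocalMin f xstar := Filter.Eventually.of_forall hmin
    have h0 := hloc.hasFDerivAt_eq_zero (hgrad xstar).hasFDerivAt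
    simpa using h0
  have i1 := interpolation_of_convex_lipschitz_gradient hL hconv hgrad hlip (x k) xstar
  have i2 := interpolation_of_convex_lipschitz_gradient hL hconv hgrad hlip (x k) (x (k - 1))
  rw [hstar, zero_sub, norm_neg, ← neg_sub (x k) xstar, inner_neg_right, ← hg] at i1
  rw [← neg_sub (x k) (x (k - 1)), inner_neg_right, ← hg, ← hh, norm_sub_sq_real,
    real_inner_comm g h] at i2
  rw [hstep, norm_sub_sq_real, real_inner_smul_right, norm_smul,
    Real.norm_of_nonneg (by positivity)]
  have j1 := mul_le_mul_of_nonneg_left i1 hb.le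
  have j2 := mul_le_mul_of_nonneg_left i2 hβ0
  -- The claim multiplied by `L ^ 2 * (1 - β) ^ 2`.
  have key : 2 * L * (f (x k) - f xstar) - 2 * ((1 - β) * L * ⟪a, g⟫) + ‖g‖ ^ 2
      ≤ 2 * β * L * (f (x (k - 1)) - f xstar) - β * ‖h‖ ^ 2 := by
    rw [hinner]
    linarith
  have hdiv := div_le_div_of_nonneg_right key (by positivity : 0 ≤ L ^ 2 * (1 - β) ^ 2)
  have e1 : (2 * L * (f (x k) - f xstar) - 2 * ((1 - β) * L * ⟪a, g⟫) + ‖g‖ ^ 2)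
        / (L ^ 2 * (1 - β) ^ 2)
      = 2 / (L * (1 - β) ^ 2) * (f (x k) - f xstar) - 2 * (1 / (L * (1 - β)) * ⟪a, g⟫)
        + (1 / (L * (1 - β)) * ‖g‖) ^ 2 := by
    field_simp
  have e2 : (2 * β * L * (f (x (k - 1)) - f xstar) - β * ‖h‖ ^ 2) / (L ^ 2 * (1 - β) ^ 2)
      = 2 * β / (L * (1 - β) ^ 2) * (f (x (k - 1)) - f xstar)
        - β / (L ^ 2 * (1 - β) ^ 2) * ‖h‖ ^ 2 := by
    field_simp
  rw [e1, e2] at hdiv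
  linarith
end
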